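/- Let G be a simple graph on n vertices with domination number γ, where 1 ≤ γ ≤ n−1. Then the signless Laplacian spectral radius of G satisfies q(G) ≤ 2(n − γ); equivalently, every eigenvalue of the signless Laplacian matrix Q(G) is at most 2(n − γ). -/

import Mathlib

open SimpleGraph Matrix

/-- `S` is a dominating set of `G`: every vertex outside `S` has a neighbor in `S`. -/
def IsDominatingSet {V : Type*} (G : SimpleGraph V) (S : Set V) : Prop :=
  ∀ v : V, v ∉ S → ∃ u ∈ S, G.Adj u v

/-- The domination number of a finite graph: the minimum cardinality of a dominating set. -/
noncomputable def dominationNumber {V : Type*} [Fintype V] (G : SimpleGraph V) : ℕ :=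
  sInf {k : ℕ | ∃ S : Finset V, S.card = k ∧ IsDominatingSet G (S : Set V)}

/-- The signless Laplacian matrix `D(G) + A(G)` of a simple graph. -/
def signlessLapMatrix {V : Type*} [Fintype V] [DecidableEq V]
    (G : SimpleGraph V) [DecidableRel G.Adj] : Matrix V V ℝ :=
  G.degMatrix ℝ + G.adjMatrix ℝ

/- By Gershgorin's circle theorem, an eigenvalue of the signless Laplacian lies within distance
`deg v` of the diagonal entry `deg v` for some vertex `v`, so it is at most `2 deg v`. Since `v`
dominates its neighbors, the complement of its neighborhood is a dominating set, and the domination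
number is at most `n - deg v`. -/

theorem isDominatingSet_compl_neighborSet {V : Type*} (G : SimpleGraph V) (v : V) :
    IsDominatingSet G (G.neighborSet v)ᶜ :=
  fun _ hw => ⟨v, G.notMem_neighborSet_self, not_not.mp hw⟩

theorem IsDominatingSet.dominationNumber_le_card {V : Type*} [Fintype V] {G : SimpleGraph V}
    {S : Finset V} (hS : IsDominatingSet G (S : Set V)) : dominationNumber G ≤ S.card :=
  Nat.sInf_le ⟨S, rfl, hS⟩

theorem dominationNumber_add_degree_le_card {V : Type*} [Fintype V] (G : SimpleGraph V) (v : V)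
    [Fintype (G.neighborSet v)] : dominationNumber G + G.degree v ≤ Fintype.card V := by
  classical
  have hdom : IsDominatingSet G ((G.neighborFinset v)ᶜ : Finset V) := by
    simpa using isDominatingSet_compl_neighborSet G v
  calc dominationNumber G + G.degree v
      ≤ (G.neighborFinset v)ᶜ.card + (G.neighborFinset v).card :=
        Nat.add_le_add_right hdom.dominationNumber_le_card _
    _ = Fintype.card V := Finset.card_compl_add_card _

section signlessLapMatrix

variable {V : Type*} [Fintype V] [DecidableEq V] {G : SimpleGraph V} [DecidableRel G.Adj]

theorem signlessLapMatrix_apply_self (v : V) : signlessLapMatrix G v v = G.degree v := by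
  simp [signlessLapMatrix, degMatrix]

theorem signlessLapMatrix_apply_of_ne {v w : V} (h : v ≠ w) :
    signlessLapMatrix G v w = G.adjMatrix ℝ v w := by
  simp [signlessLapMatrix, degMatrix, h]

theorem sum_norm_signlessLapMatrix_erase (v : V) :
    ∑ w ∈ Finset.univ.erase v, ‖signlessLapMatrix G v w‖ = G.degree v := by
  calc ∑ w ∈ Finset.univ.erase v, ‖signlessLapMatrix G v w‖
      = ∑ w ∈ Finset.univ.erase v, G.adjMatrix ℝ v w := by
        refine Finset.sum_congr rfl fun w hw => ?_
        rw [signlessLapMatrix_apply_of_ne (Finset.ne_of_mem_erase hw).symm, adjMatrix_apply]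
        split_ifs <;> simp
    _ = ∑ w, G.adjMatrix ℝ v w := Finset.sum_erase _ (by simp)
    _ = G.degree v := by
        simp [adjMatrix_apply, ← card_neighborFinset_eq_degree, neighborFinset_eq_filter]

theorem exists_le_two_mul_degree_of_hasEigenvalue_signlessLapMatrix {q : ℝ}
    (hq : Module.End.HasEigenvalue (Matrix.toLin' (signlessLapMatrix G)) q) :
    ∃ v, q ≤ 2 * G.degree v := by
  obtain ⟨v, hv⟩ := eigenvalue_mem_ball hq
  rw [Metric.mem_closedBall, Real.dist_eq, signlessLapMatrix_apply_self,
    sum_norm_signlessLapMatrix_erase] at hv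
  exact ⟨v, by linarith [le_of_abs_le hv]⟩

end signlessLapMatrix

theorem signless_laplacian_eigenvalue_le_of_dominationNumber
    {V : Type*} [Fintype V] [DecidableEq V] (G : SimpleGraph V) [DecidableRel G.Adj]
    (n γ : ℕ) (hn : Fintype.card V = n) (hγ : dominationNumber G = γ)
    (hγ1 : 1 ≤ γ) (hγn : γ ≤ n - 1)
    (q : ℝ) (hq : Module.End.HasEigenvalue (Matrix.toLin' (signlessLapMatrix G)) q) :
    q ≤ 2 * ((n : ℝ) - γ) := by
  obtain ⟨v, hqv⟩ := exists_le_two_mul_degree_of_hasEigenvalue_signlessLapMatrix hq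
  have hdeg : (γ : ℝ) + G.degree v ≤ n := by
    rw [← hγ, ← hn]
    exact_mod_cast dominationNumber_add_degree_le_card G v
  linarith
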